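/- Let H be a real Hilbert space, let P be a continuous polynomial of degree at most n on H with ‖P‖ ≤ 1, and let 1 ≤ k ≤ n. Then for every x ∈ H with ‖x‖ < 1 one has ‖D^k P(x)‖² = ‖D̂^k P(x)‖² ≤ M_k(‖x‖), where M_k(t) = (T_n^{(k)}(t))² + (S_n^{(k)}(t))². -/

import Mathlib

open Metric

/-- `M_k(t) = (T_n^{(k)}(t))^2 + (S_n^{(k)}(t))^2`, where `T_n(t) = cos (n arccos t)` and
`S_n(t) = sin (n arccos t)` on `(-1, 1)`, and the superscript `(k)` denotes the `k`-th
derivative of these functions. -/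
noncomputable def chebM (n k : ℕ) (t : ℝ) : ℝ :=
  (iteratedDeriv k (fun s : ℝ => Real.cos (n * Real.arccos s)) t) ^ 2 +
  (iteratedDeriv k (fun s : ℝ => Real.sin (n * Real.arccos s)) t) ^ 2

/-!
On the chord of the unit ball through `x` in a direction `e`, parametrized by `[-1, 1]`, the
polynomial `P` becomes a polynomial `p` of degree at most `n` in one variable with `|p| ≤ 1`, so one
needs the inequality `p^(k)(t)² ≤ M_k(t)` of Schaeffer and Duffin. If it failed, some multiple `q`
of `p` with `|q| < 1` would make `(q^(k))²` touch `M_k` from below at a point, where `q` would then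
have the same `k`-th and `(k+1)`-st derivatives as `cos α • T_n + sin α • S_n` for some phase `α`.
That function alternates between the values `±1`, so the derivative of its difference with `q` has
`n` zeros, or `n - 1` if `sin α = 0`; adding the double zero of the `k`-th derivative of the
difference, Rolle's theorem produces a zero of its derivative of order `n + 1`, respectively `n`,
and there is none.

Passing from the chord to the ball costs nothing, because `M_k(t)` is a sum of powers of
`(1 - t²)⁻¹` of degree at least `k` with nonnegative coefficients. Finally, the norm of a symmetric
multilinear form on a Hilbert space is its supremum on the diagonal (Banach): in finite dimension,
among the maximizing unit tuples, one whose vectors have the longest sum must be constant.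
-/

/-! ### Counting zeros -/

section Rolle

variable {s : Set ℝ}

theorem exists_finset_zeros_deriv (hs : s.OrdConnected) {f f' : ℝ → ℝ}
    (hf : ∀ t ∈ s, HasDerivAt f (f' t) t) {Z : Finset ℝ} (hZ : ∀ z ∈ Z, z ∈ s ∧ f z = 0) :
    ∃ Z' : Finset ℝ, (∀ z ∈ Z', z ∈ s ∧ f' z = 0) ∧ Disjoint Z' Z ∧ Z.card ≤ Z'.card + 1 := by
  classical
  have rolle : ∀ q : ℝ × ℝ, q ∈ Z ×ˢ Z → q.1 < q.2 →
      ∃ c, c ∈ Set.Ioo q.1 q.2 ∧ c ∈ s ∧ f' c = 0 := by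
    rintro ⟨x, y⟩ hxy hlt
    obtain ⟨⟨hxs, hx0⟩, hys, hy0⟩ := (Finset.mem_product.1 hxy).imp (hZ x) (hZ y)
    have hsub : Set.Icc x y ⊆ s := hs.out hxs hys
    obtain ⟨c, hc, hc0⟩ := exists_hasDerivAt_eq_zero hlt
      (fun t ht ↦ (hf t (hsub ht)).continuousAt.continuousWithinAt) (hx0.trans hy0.symm)
      (fun t ht ↦ hf t (hsub (Set.Ioo_subset_Icc_self ht)))
    exact ⟨c, hc, hsub (Set.Ioo_subset_Icc_self hc), hc0⟩
  choose! c hcIoo hcs hc0 using rolle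
  set W := ((Z ×ˢ Z).filter fun q ↦ q.1 < q.2).image c with hW
  have hWzero : ∀ w ∈ W, w ∈ s ∧ f' w = 0 := by
    simp only [hW, Finset.mem_image, Finset.mem_filter]
    rintro _ ⟨q, ⟨hq, hlt⟩, rfl⟩
    exact ⟨hcs q hq hlt, hc0 q hq hlt⟩
  refine ⟨W \ Z, fun z hz ↦ hWzero z (Finset.mem_sdiff.1 hz).1, Finset.sdiff_disjoint,
    Finset.card_le_sdiff_of_interleaved fun x hx y hy hxy _ ↦ ?_⟩
  have hmem : (x, y) ∈ Z ×ˢ Z := Finset.mk_mem_product hx hy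
  exact ⟨c (x, y), Finset.mem_image_of_mem c (Finset.mem_filter.2 ⟨hmem, hxy⟩),
    hcIoo (x, y) hmem hxy⟩

variable {g : ℕ → ℝ → ℝ}

theorem exists_finset_zeros_iterate_deriv (hs : s.OrdConnected)
    (hg : ∀ j, ∀ t ∈ s, HasDerivAt (g j) (g (j + 1) t) t) (j i N : ℕ) {Z : Finset ℝ}
    (hZ : ∀ z ∈ Z, z ∈ s ∧ g j z = 0) (hN : N + i ≤ Z.card) :
    ∃ Z' : Finset ℝ, (∀ z ∈ Z', z ∈ s ∧ g (j + i) z = 0) ∧ N ≤ Z'.card := by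
  induction i generalizing N with
  | zero => exact ⟨Z, hZ, hN⟩
  | succ i ih =>
    obtain ⟨Z₁, hZ₁, hcard₁⟩ := ih (N + 1) (by omega)
    obtain ⟨Z₂, hZ₂, -, hcard₂⟩ := exists_finset_zeros_deriv hs (hg (j + i)) hZ₁
    exact ⟨Z₂, hZ₂, by omega⟩

/-- A double zero of `g k` gains one zero over plain Rolle: it is a zero of `g (k + 1)` distinct
from all those that Rolle's theorem produces. -/
theorem exists_zero_deriv_of_double_zero (hs : s.OrdConnected)
    (hg : ∀ j, ∀ t ∈ s, HasDerivAt (g j) (g (j + 1) t) t) {k N : ℕ} (hk : k ≠ 0)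
    (hkN : k ≤ N + 1) {Z : Finset ℝ} (hZ : ∀ z ∈ Z, z ∈ s ∧ g 1 z = 0) (hN : N ≤ Z.card)
    {x : ℝ} (hx : x ∈ s) (hx₀ : g k x = 0) (hx₁ : g (k + 1) x = 0) :
    ∃ z ∈ s, g (N + 1) z = 0 := by
  classical
  rcases hkN.eq_or_lt with rfl | hlt
  · exact ⟨x, hx, hx₀⟩
  obtain ⟨Z₁, hZ₁, hcard₁⟩ :=
    exists_finset_zeros_iterate_deriv hs hg 1 (k - 1) (N + 1 - k) hZ (by omega)
  rw [show 1 + (k - 1) = k by omega] at hZ₁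
  obtain ⟨Z₂, hZ₂, hdisj, hcard₂⟩ := exists_finset_zeros_deriv hs (hg k) (Z := insert x Z₁)
    (Finset.forall_mem_insert _ _ _ |>.2 ⟨⟨hx, hx₀⟩, hZ₁⟩)
  have hxZ₂ : x ∉ Z₂ := Finset.disjoint_right.1 hdisj (Finset.mem_insert_self _ _)
  have hcard : N + 1 - k ≤ Z₂.card + 1 :=
    hcard₁.trans ((Finset.card_le_card (Finset.subset_insert _ _)).trans hcard₂)
  obtain ⟨Z₃, hZ₃, hcard₃⟩ :=
    exists_finset_zeros_iterate_deriv hs hg (k + 1) (N - k) 1 (Z := insert x Z₂)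
      (Finset.forall_mem_insert _ _ _ |>.2 ⟨⟨hx, hx₁⟩, hZ₂⟩)
      (by rw [Finset.card_insert_of_notMem hxZ₂]; omega)
  rw [show k + 1 + (N - k) = N + 1 by omega] at hZ₃
  obtain ⟨z, hz⟩ := Finset.card_pos.1 hcard₃
  exact ⟨z, hZ₃ z hz⟩

theorem exists_finset_zeros_of_alternating {h : ℝ → ℝ} (hh : Continuous h) (N : ℕ) {e : ℕ → ℝ}
    (he : StrictMonoOn e (Set.Iic N)) (halt : ∀ i ≤ N, 0 < (-1) ^ i * h (e i)) :
    ∃ Z : Finset ℝ, (∀ z ∈ Z, z ∈ Set.Ioo (e 0) (e N) ∧ h z = 0) ∧ Z.card = N := by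
  classical
  induction N with
  | zero => exact ⟨∅, by simp, rfl⟩
  | succ N ih =>
    obtain ⟨Z, hZ, hcard⟩ := ih (he.mono (Set.Iic_subset_Iic.2 N.le_succ))
      fun i hi ↦ halt i (by omega)
    have hlt : e N < e (N + 1) := he N.le_succ Set.self_mem_Iic N.lt_succ_self
    have hle : e 0 ≤ e N := he.monotoneOn (Nat.zero_le _) N.le_succ (Nat.zero_le _)
    have hright : (-1) ^ N * h (e (N + 1)) < 0 := by
      have := halt (N + 1) le_rfl
      rw [pow_succ] at this
      linarith
    obtain ⟨z, hz, hz₀⟩ := intermediate_value_Ioo' hlt.le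
      (f := fun t ↦ (-1) ^ N * h t) (by fun_prop) ⟨hright, halt N N.le_succ⟩
    have hzZ : z ∉ Z := fun hmem ↦ (hZ z hmem).1.2.not_gt hz.1
    refine ⟨insert z Z, Finset.forall_mem_insert _ _ _ |>.2 ⟨⟨⟨hle.trans_lt hz.1, hz.2⟩, ?_⟩,
      fun w hw ↦ ?_⟩, by rw [Finset.card_insert_of_notMem hzZ, hcard]⟩
    · simpa using hz₀
    · exact ⟨⟨(hZ w hw).1.1, (hZ w hw).1.2.trans hlt⟩, (hZ w hw).2⟩

end Rolle

/-! ### The phase-shifted Chebyshev functions -/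

theorem one_sub_sq_pos_of_mem_Ioo {t : ℝ} (ht : t ∈ Set.Ioo (-1 : ℝ) 1) : 0 < 1 - t ^ 2 := by
  nlinarith [ht.1, ht.2]

theorem hasDerivAt_iteratedDeriv_of_contDiffAt {f : ℝ → ℝ} {t : ℝ} (hf : ContDiffAt ℝ ⊤ f t)
    (k : ℕ) : HasDerivAt (iteratedDeriv k f) (iteratedDeriv (k + 1) f t) t := by
  rw [iteratedDeriv_succ, iteratedDeriv_eq_iterate]
  exact (hf.analyticAt.iterated_deriv k).differentiableAt.hasDerivAt

/-- The function `cos α • T_ν + sin α • S_ν`, written through its value at `cos θ`, which is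
`cos (ν θ - α)`. The functions `T_ν` and `S_ν` are the cases `α = 0` and `α = π / 2`, and
`α + π / 2` plays the role of a conjugate of `α`. -/
noncomputable def chebPhase (ν α t : ℝ) : ℝ :=
  Real.cos (ν * Real.arccos t - α)

section Phase

open Real

variable {ν α t : ℝ}

theorem contDiffAt_chebPhase (ht : t ∈ Set.Ioo (-1 : ℝ) 1) : ContDiffAt ℝ ⊤ (chebPhase ν α) t :=
  contDiff_cos.contDiffAt.comp t
    ((contDiffAt_const.mul (contDiffAt_arccos ht.1.ne' ht.2.ne)).sub contDiffAt_const)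

theorem hasDerivAt_iteratedDeriv_chebPhase (k : ℕ) (ht : t ∈ Set.Ioo (-1 : ℝ) 1) :
    HasDerivAt (iteratedDeriv k (chebPhase ν α)) (iteratedDeriv (k + 1) (chebPhase ν α) t) t :=
  hasDerivAt_iteratedDeriv_of_contDiffAt (contDiffAt_chebPhase ht) k

theorem chebPhase_eq_add (ν α : ℝ) :
    chebPhase ν α = cos α • chebPhase ν 0 + sin α • chebPhase ν (π / 2) := by
  funext t
  simp [chebPhase, cos_sub, mul_comm]

theorem iteratedDeriv_chebPhase_eq_add (k : ℕ) (α : ℝ) (ht : t ∈ Set.Ioo (-1 : ℝ) 1) :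
    iteratedDeriv k (chebPhase ν α) t = cos α * iteratedDeriv k (chebPhase ν 0) t
      + sin α * iteratedDeriv k (chebPhase ν (π / 2)) t := by
  have hdiff (β : ℝ) : ContDiffAt ℝ k (chebPhase ν β) t := (contDiffAt_chebPhase ht).of_le le_top
  have hsmul (c β : ℝ) : ContDiffAt ℝ k (c • chebPhase ν β) t := (hdiff β).const_smul c
  rw [chebPhase_eq_add, iteratedDeriv_add (hsmul _ _) (hsmul _ _),
    iteratedDeriv_const_smul (hdiff _), iteratedDeriv_const_smul (hdiff _), smul_eq_mul,
    smul_eq_mul]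

theorem chebM_eq_sq_add_sq (n k : ℕ) (t : ℝ) :
    chebM n k t = iteratedDeriv k (chebPhase n 0) t ^ 2
      + iteratedDeriv k (chebPhase n (π / 2)) t ^ 2 := by
  have hT : chebPhase n 0 = fun s ↦ cos (n * arccos s) := by funext; simp [chebPhase]
  have hS : chebPhase n (π / 2) = fun s ↦ sin (n * arccos s) := by
    funext; simp [chebPhase, cos_sub_pi_div_two]
  rw [chebM, hT, hS]

theorem chebM_nonneg (n k : ℕ) (t : ℝ) : 0 ≤ chebM n k t := by
  rw [chebM]
  positivity

theorem chebM_zero_right (n : ℕ) (t : ℝ) : chebM n 0 t = 1 := by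
  simp [chebM]

theorem hasDerivAt_chebPhase (ht : t ∈ Set.Ioo (-1 : ℝ) 1) :
    HasDerivAt (chebPhase ν α) (ν * chebPhase ν (α + π / 2) t / √(1 - t ^ 2)) t := by
  refine ((hasDerivAt_arccos ht.1.ne' ht.2.ne).const_mul ν |>.sub_const α).cos.congr_deriv ?_
  rw [chebPhase, ← sub_sub, cos_sub_pi_div_two]
  ring

theorem iteratedDeriv_one_chebPhase (ht : t ∈ Set.Ioo (-1 : ℝ) 1) :
    iteratedDeriv 1 (chebPhase ν α) t = ν * chebPhase ν (α + π / 2) t / √(1 - t ^ 2) := by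
  rw [iteratedDeriv_one, (hasDerivAt_chebPhase ht).deriv]

theorem hasDerivAt_one_sub_sq (t : ℝ) : HasDerivAt (fun t : ℝ ↦ 1 - t ^ 2) (-(2 * t)) t := by
  simpa using (hasDerivAt_pow 2 t).const_sub 1

theorem chebPhase_differential_equation (ν α : ℝ) (ht : t ∈ Set.Ioo (-1 : ℝ) 1) :
    (1 - t ^ 2) * iteratedDeriv 2 (chebPhase ν α) t - t * iteratedDeriv 1 (chebPhase ν α) t
      + ν ^ 2 * chebPhase ν α t = 0 := by
  have hw : 0 < √(1 - t ^ 2) := sqrt_pos.2 (one_sub_sq_pos_of_mem_Ioo ht)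
  have hfirst : (fun s ↦ iteratedDeriv 1 (chebPhase ν α) s * √(1 - s ^ 2))
      =ᶠ[nhds t] fun s ↦ ν * chebPhase ν (α + π / 2) s := by
    filter_upwards [isOpen_Ioo.mem_nhds ht] with s hs
    rw [iteratedDeriv_one_chebPhase hs,
      div_mul_cancel₀ _ (sqrt_pos.2 (one_sub_sq_pos_of_mem_Ioo hs)).ne']
  have hleft := (hasDerivAt_iteratedDeriv_chebPhase (ν := ν) (α := α) 1 ht).mul
    ((hasDerivAt_one_sub_sq t).sqrt (one_sub_sq_pos_of_mem_Ioo ht).ne')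
  have hright := (hasDerivAt_chebPhase (ν := ν) (α := α + π / 2) ht).const_mul ν
  have heq := hleft.unique (hright.congr_of_eventuallyEq hfirst)
  have hneg : chebPhase ν (α + π / 2 + π / 2) t = -chebPhase ν α t := by
    rw [chebPhase, chebPhase, add_assoc, add_halves, ← sub_sub, cos_sub_pi]
  rw [hneg] at heq
  field_simp at heq
  rw [sq_sqrt (one_sub_sq_pos_of_mem_Ioo ht).le] at heq
  linear_combination heq

theorem iteratedDeriv_chebPhase_differential_equation (ν α : ℝ) (k : ℕ) :
    ∀ t ∈ Set.Ioo (-1 : ℝ) 1, (1 - t ^ 2) * iteratedDeriv (k + 2) (chebPhase ν α) t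
      - (2 * k + 1) * t * iteratedDeriv (k + 1) (chebPhase ν α) t
      + (ν ^ 2 - k ^ 2) * iteratedDeriv k (chebPhase ν α) t = 0 := by
  induction k with
  | zero =>
    intro t ht
    simpa [iteratedDeriv_zero] using chebPhase_differential_equation ν α ht
  | succ k ih =>
    intro t ht
    have hD (j : ℕ) := hasDerivAt_iteratedDeriv_chebPhase (ν := ν) (α := α) j ht
    have hderiv := (((hasDerivAt_one_sub_sq t).mul (hD (k + 2))).sub
      (((hasDerivAt_id t).const_mul (2 * (k : ℝ) + 1)).mul (hD (k + 1)))).add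
      ((hD k).const_mul (ν ^ 2 - k ^ 2))
    have hzero := hderiv.unique ((hasDerivAt_const t (0 : ℝ)).congr_of_eventuallyEq
      (Filter.mem_of_superset (isOpen_Ioo.mem_nhds ht) ih))
    push_cast
    simp only [id_eq] at hzero
    linear_combination hzero

end Phase

/-! ### The expansion of `chebM` in powers of `(1 - t ^ 2)⁻¹` -/

theorem chebM_succ {n k : ℕ} {t M'' : ℝ} (ht : t ∈ Set.Ioo (-1 : ℝ) 1) {M' : ℝ → ℝ}
    (hM' : ∀ s ∈ Set.Ioo (-1 : ℝ) 1, HasDerivAt (chebM n k) (M' s) s)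
    (hM'' : HasDerivAt M' M'' t) :
    chebM n (k + 1) t = M'' / 2 - (2 * k + 1) / 2 * t * (1 - t ^ 2)⁻¹ * M' t
      + (n ^ 2 - k ^ 2) * (1 - t ^ 2)⁻¹ * chebM n k t := by
  set D := fun (β : ℝ) (j : ℕ) ↦ iteratedDeriv j (chebPhase n β) with hDdef
  have hD (β : ℝ) (j : ℕ) {s : ℝ} (hs : s ∈ Set.Ioo (-1 : ℝ) 1) :
      HasDerivAt (D β j) (D β (j + 1) s) s := hasDerivAt_iteratedDeriv_chebPhase j hs
  have hsq (j : ℕ) : chebM n j = fun s ↦ D 0 j s ^ 2 + D (Real.pi / 2) j s ^ 2 :=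
    funext (chebM_eq_sq_add_sq n j)
  have hfirst : ∀ s ∈ Set.Ioo (-1 : ℝ) 1,
      M' s = 2 * (D 0 k s * D 0 (k + 1) s + D (Real.pi / 2) k s * D (Real.pi / 2) (k + 1) s) := by
    intro s hs
    have h := ((hD 0 k hs).pow 2).add ((hD (Real.pi / 2) k hs).pow 2)
    rw [hsq] at hM'
    rw [(hM' s hs).unique h]
    push_cast
    ring
  have hsecond : M'' = 2 * (chebM n (k + 1) t
      + (D 0 k t * D 0 (k + 2) t + D (Real.pi / 2) k t * D (Real.pi / 2) (k + 2) t)) := by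
    have h := (((hD 0 k ht).mul (hD 0 (k + 1) ht)).add
      ((hD (Real.pi / 2) k ht).mul (hD (Real.pi / 2) (k + 1) ht))).const_mul (2 : ℝ)
    rw [hM''.unique (h.congr_of_eventuallyEq
      (Filter.mem_of_superset (isOpen_Ioo.mem_nhds ht) hfirst)), hsq]
    ring
  have hw := (one_sub_sq_pos_of_mem_Ioo ht).ne'
  have hode (β : ℝ) : (1 - t ^ 2) * D β (k + 2) t - (2 * k + 1) * t * D β (k + 1) t
      + (n ^ 2 - k ^ 2) * D β k t = 0 :=
    iteratedDeriv_chebPhase_differential_equation n β k t ht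
  rw [hfirst t ht, hsecond, hsq k]
  field_simp
  linear_combination -D 0 k t * hode 0 - D (Real.pi / 2) k t * hode (Real.pi / 2)

/-- The coefficient of `(1 - t ^ 2)⁻¹ ^ (k + 1 + m)` in `chebM n (k + 1) t`, for `N = n ^ 2`. The
binomial coefficient makes it vanish for `k < m`. -/
noncomputable def chebCoeff (N : ℝ) (k m : ℕ) : ℝ :=
  N * (∏ j ∈ Finset.Ioc m k, (N - j ^ 2)) * (k + m).choose (2 * m)
    * ∏ i ∈ Finset.range m, (2 * i + 1 : ℝ) ^ 2

section Coefficients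

variable {N : ℝ} {k m : ℕ}

theorem chebCoeff_eq_zero_of_lt (h : k < m) : chebCoeff N k m = 0 := by
  simp [chebCoeff, Nat.choose_eq_zero_of_lt (show k + m < 2 * m by omega)]

theorem chebCoeff_self (N : ℝ) (k : ℕ) :
    chebCoeff N k k = N * ∏ i ∈ Finset.range k, (2 * i + 1 : ℝ) ^ 2 := by
  simp [chebCoeff, ← two_mul]

theorem chebCoeff_self_pos (hN : 0 < N) (k : ℕ) : 0 < chebCoeff N k k := by
  rw [chebCoeff_self]
  positivity

theorem chebCoeff_sq_nonneg {n : ℕ} (hk : k ≤ n) (m : ℕ) : 0 ≤ chebCoeff ((n : ℝ) ^ 2) k m := by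
  have hprod : 0 ≤ ∏ j ∈ Finset.Ioc m k, ((n : ℝ) ^ 2 - (j : ℝ) ^ 2) :=
    Finset.prod_nonneg fun j hj ↦ sub_nonneg.2 <| pow_le_pow_left₀ (Nat.cast_nonneg _)
      (Nat.cast_le.2 ((Finset.mem_Ioc.1 hj).2.trans hk)) 2
  rw [chebCoeff]
  positivity

theorem chebCoeff_succ_zero (N : ℝ) (k : ℕ) :
    chebCoeff N (k + 1) 0 = (N - (k + 1) ^ 2) * chebCoeff N k 0 := by
  simp only [chebCoeff, Finset.prod_Ioc_succ_top (Nat.zero_le k), mul_zero, Nat.choose_zero_right,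
    Nat.cast_add, Nat.cast_one]
  ring

theorem chebCoeff_succ_succ (hm : m ≤ k) :
    chebCoeff N (k + 1) (m + 1) = (k + 1 + m) * (2 * m + 1) * chebCoeff N k m
      + (N - (m + 1) ^ 2 - (k + m + 2) ^ 2) * chebCoeff N k (m + 1) := by
  rcases hm.eq_or_lt with rfl | hlt
  · rw [chebCoeff_eq_zero_of_lt m.lt_succ_self, chebCoeff_self, chebCoeff_self,
      Finset.prod_range_succ]
    ring
  set a : ℝ := ((k + m + 1).choose (2 * m + 1) : ℝ) with ha
  set e : ℝ := ((k + m + 1).choose (2 * m + 2) : ℝ) with he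
  have hpascal : ((k + 1 + (m + 1)).choose (2 * (m + 1)) : ℝ) = a + e := by
    rw [ha, he, show k + 1 + (m + 1) = k + m + 1 + 1 by omega]
    exact_mod_cast Nat.choose_succ_succ (k + m + 1) (2 * m + 1)
  have habsorb : (k + m + 1) * ((k + m).choose (2 * m) : ℝ) = a * (2 * m + 1) := by
    rw [ha]
    exact_mod_cast Nat.add_one_mul_choose_eq (k + m) (2 * m)
  have hratio : e * (2 * m + 2) = a * (k - m) := by
    have h := Nat.choose_succ_right_eq (k + m + 1) (2 * m + 1)
    rw [show k + m + 1 - (2 * m + 1) = k - m by omega] at h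
    rw [ha, he, ← Nat.cast_sub hlt.le]
    exact_mod_cast h
  have hbottom : ∏ j ∈ Finset.Ioc m k, (N - (j : ℝ) ^ 2)
      = (N - (m + 1) ^ 2) * ∏ j ∈ Finset.Ioc (m + 1) k, (N - (j : ℝ) ^ 2) := by
    rw [← Finset.prod_Ioc_consecutive _ m.le_succ hlt, Nat.Ioc_succ_singleton,
      Finset.prod_singleton]
    push_cast
    rfl
  simp only [chebCoeff, hbottom, hpascal, Finset.prod_range_succ,
    Finset.prod_Ioc_succ_top (Nat.succ_le_of_lt hlt)]
  rw [show (k + (m + 1)).choose (2 * (m + 1)) = (k + m + 1).choose (2 * m + 2) from rfl, ← he]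
  push_cast
  generalize (∏ j ∈ Finset.Ioc (m + 1) k, (N - (j : ℝ) ^ 2)) = Q,
    (∏ i ∈ Finset.range m, (2 * (i : ℝ) + 1) ^ 2) = R
  linear_combination N * Q * R * (2 * m + 1) ^ 2 * (k + m + 2) * hratio
    - N * Q * R * (N - (m + 1) ^ 2) * (2 * m + 1) * habsorb

/- The left-hand side is what the recursion `chebM_succ` makes of the powers
`(1 - t ^ 2)⁻¹ ^ (k + 1 + m)`. -/
theorem sum_chebCoeff_succ (N : ℝ) (k : ℕ) (u : ℝ) :
    ∑ m ∈ Finset.range (k + 1), chebCoeff N k m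
        * ((k + 1 + m) * (2 * m + 1) * u ^ (k + 1 + m + 2)
          + (N - (k + 1 + m) ^ 2 - m ^ 2) * u ^ (k + 1 + m + 1))
      = ∑ m ∈ Finset.range (k + 2), chebCoeff N (k + 1) m * u ^ (k + 2 + m) := by
  have hlast : ∑ m ∈ Finset.range (k + 1),
        chebCoeff N k m * ((N - (k + 1 + m) ^ 2 - m ^ 2) * u ^ (k + 1 + m + 1))
      = ∑ m ∈ Finset.range (k + 2),
        chebCoeff N k m * ((N - (k + 1 + m) ^ 2 - m ^ 2) * u ^ (k + 1 + m + 1)) := by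
    rw [Finset.sum_range_succ _ (k + 1), chebCoeff_eq_zero_of_lt k.lt_succ_self, zero_mul,
      add_zero]
  simp only [mul_add, Finset.sum_add_distrib, hlast]
  rw [Finset.sum_range_succ' _ (k + 1), Finset.sum_range_succ' _ (k + 1), ← add_assoc,
    ← Finset.sum_add_distrib]
  congr 1
  · refine Finset.sum_congr rfl fun m hm ↦ ?_
    rw [chebCoeff_succ_succ (Finset.mem_range_succ_iff.1 hm)]
    push_cast
    ring
  · rw [chebCoeff_succ_zero]
    push_cast
    ring

end Coefficients

theorem hasDerivAt_inv_one_sub_sq_pow (p : ℕ) {t : ℝ} (ht : t ∈ Set.Ioo (-1 : ℝ) 1) :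
    HasDerivAt (fun s : ℝ ↦ (1 - s ^ 2)⁻¹ ^ p) (2 * p * t * (1 - t ^ 2)⁻¹ ^ (p + 1)) t := by
  have hw := (one_sub_sq_pos_of_mem_Ioo ht).ne'
  refine (((hasDerivAt_one_sub_sq t).inv hw).pow p).congr_deriv ?_
  cases p with
  | zero => simp
  | succ p =>
    simp only [Pi.inv_apply, inv_pow, Nat.add_sub_cancel]
    field_simp
    ring

theorem chebM_succ_eq_sum (n k : ℕ) : ∀ t ∈ Set.Ioo (-1 : ℝ) 1, chebM n (k + 1) t
    = ∑ m ∈ Finset.range (k + 1), chebCoeff (n ^ 2) k m * (1 - t ^ 2)⁻¹ ^ (k + 1 + m) := by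
  induction k with
  | zero =>
    intro t ht
    have hw := one_sub_sq_pos_of_mem_Ioo ht
    have hpyth : chebPhase n (Real.pi / 2) t ^ 2 + chebPhase n (Real.pi / 2 + Real.pi / 2) t ^ 2
        = 1 := by
      rw [chebPhase, chebPhase, ← sub_sub, Real.cos_sub_pi_div_two (_ - _),
        Real.cos_sq_add_sin_sq]
    rw [chebM_eq_sq_add_sq, iteratedDeriv_one_chebPhase ht, iteratedDeriv_one_chebPhase ht,
      zero_add, div_pow, div_pow, Real.sq_sqrt hw.le, ← add_div, mul_pow, mul_pow, ← mul_add,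
      hpyth]
    simp [chebCoeff, div_eq_mul_inv]
  | succ k ih =>
    intro t ht
    set N : ℝ := n ^ 2
    set c := chebCoeff N k
    have hpow (p : ℕ) {s : ℝ} (hs : s ∈ Set.Ioo (-1 : ℝ) 1) := hasDerivAt_inv_one_sub_sq_pow p hs
    have hM' : ∀ s ∈ Set.Ioo (-1 : ℝ) 1, HasDerivAt (chebM n (k + 1))
        (∑ m ∈ Finset.range (k + 1),
          c m * (2 * (k + 1 + m : ℕ) * s * (1 - s ^ 2)⁻¹ ^ (k + 1 + m + 1))) s := fun s hs ↦
      (HasDerivAt.fun_sum fun m _ ↦ (hpow _ hs).const_mul (c m)).congr_of_eventuallyEq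
        (Filter.mem_of_superset (isOpen_Ioo.mem_nhds hs) ih)
    have hM'' := HasDerivAt.fun_sum (u := Finset.range (k + 1)) fun m _ ↦
      (((hasDerivAt_id t).const_mul (2 * ((k + 1 + m : ℕ) : ℝ))).mul
        (hpow (k + 1 + m + 1) ht)).const_mul (c m)
    have hu : t ^ 2 * (1 - t ^ 2)⁻¹ = (1 - t ^ 2)⁻¹ - 1 := by
      field_simp [(one_sub_sq_pos_of_mem_Ioo ht).ne']
      ring
    rw [chebM_succ ht hM' hM'', ih t ht, ← sum_chebCoeff_succ, Finset.sum_div, Finset.mul_sum,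
      Finset.mul_sum, ← Finset.sum_sub_distrib, ← Finset.sum_add_distrib]
    refine Finset.sum_congr rfl fun m _ ↦ ?_
    simp only [id_eq]
    push_cast
    linear_combination c m * (k + 1 + m) * (2 * (k + 2 + m) - (2 * k + 3))
      * (1 - t ^ 2)⁻¹ ^ (k + 1 + m + 1) * hu

section Consequences

variable {n k : ℕ} {t : ℝ}

theorem chebM_succ_pos (hn : n ≠ 0) (hk : k ≤ n) (ht : t ∈ Set.Ioo (-1 : ℝ) 1) :
    0 < chebM n (k + 1) t := by
  have hu : 0 < (1 - t ^ 2)⁻¹ := inv_pos.2 (one_sub_sq_pos_of_mem_Ioo ht)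
  have hN : (0 : ℝ) < n ^ 2 := by positivity
  rw [chebM_succ_eq_sum n k t ht]
  exact Finset.sum_pos' (fun m _ ↦ mul_nonneg (chebCoeff_sq_nonneg hk m) (by positivity))
    ⟨k, Finset.self_mem_range_succ k, mul_pos (chebCoeff_self_pos hN k) (by positivity)⟩

/-- `chebM n (k + 1) t` multiplied by `(1 - t ^ 2) ^ (2 * k + 1)`, which clears its denominators;
unlike `chebM` it is continuous and positive up to the endpoints `±1`. -/
noncomputable def chebMNumerator (n k : ℕ) (t : ℝ) : ℝ :=
  ∑ m ∈ Finset.range (k + 1), chebCoeff (n ^ 2) k m * (1 - t ^ 2) ^ (k - m)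

theorem continuous_chebMNumerator (n k : ℕ) : Continuous (chebMNumerator n k) := by
  unfold chebMNumerator
  fun_prop

theorem chebMNumerator_pos (hn : n ≠ 0) (hk : k ≤ n) (ht : t ∈ Set.Icc (-1 : ℝ) 1) :
    0 < chebMNumerator n k t := by
  have hw : 0 ≤ 1 - t ^ 2 := by nlinarith [ht.1, ht.2]
  have hN : (0 : ℝ) < n ^ 2 := by positivity
  exact Finset.sum_pos' (fun m _ ↦ mul_nonneg (chebCoeff_sq_nonneg hk m) (pow_nonneg hw _))
    ⟨k, Finset.self_mem_range_succ k, by simpa using chebCoeff_self_pos hN k⟩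

theorem chebM_succ_mul_pow (n k : ℕ) (ht : t ∈ Set.Ioo (-1 : ℝ) 1) :
    chebM n (k + 1) t * (1 - t ^ 2) ^ (2 * k + 1) = chebMNumerator n k t := by
  have hw := (one_sub_sq_pos_of_mem_Ioo ht).ne'
  rw [chebM_succ_eq_sum n k t ht, chebMNumerator, Finset.sum_mul]
  refine Finset.sum_congr rfl fun m hm ↦ ?_
  have hexp : 2 * k + 1 = (k + 1 + m) + (k - m) := by
    have := Finset.mem_range_succ_iff.1 hm
    omega
  rw [hexp, pow_add _ (k + 1 + m), inv_pow, mul_assoc,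
    inv_mul_cancel_left₀ (pow_ne_zero (k + 1 + m) hw)]

theorem chebM_succ_le_of_one_sub_sq_mul_sq {r s : ℝ} (hk : k ≤ n) (ht : t ∈ Set.Ioo (-1 : ℝ) 1)
    (hs : s ∈ Set.Ioo (-1 : ℝ) 1) (hr : r ^ 2 ≤ 1) (hrs : (1 - t ^ 2) * r ^ 2 = 1 - s ^ 2) :
    chebM n (k + 1) t ≤ (r ^ (k + 1)) ^ 2 * chebM n (k + 1) s := by
  have hwt := one_sub_sq_pos_of_mem_Ioo ht
  have hws := one_sub_sq_pos_of_mem_Ioo hs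
  have hu : (1 - t ^ 2)⁻¹ = r ^ 2 * (1 - s ^ 2)⁻¹ := by
    field_simp
    rw [← hrs, mul_comm]
  rw [chebM_succ_eq_sum n k t ht, chebM_succ_eq_sum n k s hs, Finset.mul_sum]
  refine Finset.sum_le_sum fun m _ ↦ ?_
  have hpow : (r ^ 2) ^ (k + 1 + m) ≤ (r ^ (k + 1)) ^ 2 := by
    rw [pow_right_comm r (k + 1)]
    exact pow_le_pow_of_le_one (sq_nonneg r) hr (by omega)
  have hterm : 0 ≤ chebCoeff (n ^ 2) k m * (1 - s ^ 2)⁻¹ ^ (k + 1 + m) :=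
    mul_nonneg (chebCoeff_sq_nonneg hk m) (by positivity)
  calc chebCoeff (n ^ 2) k m * (1 - t ^ 2)⁻¹ ^ (k + 1 + m)
      = (r ^ 2) ^ (k + 1 + m) * (chebCoeff (n ^ 2) k m * (1 - s ^ 2)⁻¹ ^ (k + 1 + m)) := by
        rw [hu, mul_pow]; ring
    _ ≤ _ := mul_le_mul_of_nonneg_right hpow hterm

end Consequences

/-! ### Derivatives of polynomials and of the Chebyshev polynomial -/

section PolynomialDerivatives

open Polynomial

theorem hasDerivAt_eval_iterate_derivative (p : ℝ[X]) (j : ℕ) (t : ℝ) :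
    HasDerivAt (fun t ↦ (derivative^[j] p).eval t) ((derivative^[j + 1] p).eval t) t := by
  rw [Function.iterate_succ_apply']
  exact (derivative^[j] p).hasDerivAt t

theorem iteratedDeriv_eval (p : ℝ[X]) (j : ℕ) :
    iteratedDeriv j (fun t ↦ p.eval t) = fun t ↦ (derivative^[j] p).eval t := by
  induction j with
  | zero => simp
  | succ j ih =>
    rw [iteratedDeriv_succ, ih]
    exact funext fun t ↦ (hasDerivAt_eval_iterate_derivative p j t).deriv

theorem eval_iterate_derivative_of_natDegree_le {p : ℝ[X]} {n : ℕ} (hp : p.natDegree ≤ n)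
    (t : ℝ) : (derivative^[n] p).eval t = n.factorial * p.coeff n := by
  have hconst : (derivative^[n] p).natDegree = 0 := by
    have := natDegree_iterate_derivative p n
    omega
  rw [eq_C_of_natDegree_eq_zero hconst, eval_C, coeff_iterate_derivative, zero_add,
    Nat.descFactorial_self, nsmul_eq_mul]

variable {n : ℕ} {t : ℝ}

theorem iteratedDeriv_chebPhase_zero_right (j : ℕ) (ht : t ∈ Set.Ioo (-1 : ℝ) 1) :
    iteratedDeriv j (chebPhase n 0) t = (derivative^[j] (Chebyshev.T ℝ n)).eval t := by
  have heq : chebPhase n 0 =ᶠ[nhds t] fun s ↦ (Chebyshev.T ℝ n).eval s := by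
    filter_upwards [isOpen_Ioo.mem_nhds ht] with s hs
    have h := Chebyshev.T_real_cos (Real.arccos s) n
    rw [Real.cos_arccos hs.1.le hs.2.le] at h
    simpa [chebPhase] using h.symm
  rw [heq.iteratedDeriv_eq, iteratedDeriv_eval]

theorem iteratedDeriv_succ_chebPhase_zero_right (ht : t ∈ Set.Ioo (-1 : ℝ) 1) :
    iteratedDeriv (n + 1) (chebPhase n 0) t = 0 := by
  rw [iteratedDeriv_chebPhase_zero_right _ ht,
    iterate_derivative_eq_zero (by simp [Chebyshev.natDegree_T]), eval_zero]

theorem iteratedDeriv_succ_chebPhase_pi_div_two_ne_zero (hn : n ≠ 0)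
    (ht : t ∈ Set.Ioo (-1 : ℝ) 1) : iteratedDeriv (n + 1) (chebPhase n (Real.pi / 2)) t ≠ 0 := by
  have hpos := chebM_succ_pos hn le_rfl ht
  rw [chebM_eq_sq_add_sq, iteratedDeriv_succ_chebPhase_zero_right ht] at hpos
  exact fun h ↦ by simp [h] at hpos

end PolynomialDerivatives

/-! ### Polynomials do not touch the phase-shifted Chebyshev functions -/

section Contact

open Polynomial Real

variable {n k : ℕ} {p : ℝ[X]} {α x : ℝ}

/-- The derivative of `θ ↦ cos (n θ - α) - p (cos θ)`, the difference between a phase-shifted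
Chebyshev function and a polynomial in the angular variable. -/
noncomputable def chebGapDeriv (n : ℕ) (α : ℝ) (p : ℝ[X]) (θ : ℝ) : ℝ :=
  sin θ * p.derivative.eval (cos θ) - n * sin (n * θ - α)

theorem continuous_chebGapDeriv : Continuous (chebGapDeriv n α p) := by
  unfold chebGapDeriv
  fun_prop

theorem hasDerivAt_chebGap (n : ℕ) (α : ℝ) (p : ℝ[X]) (θ : ℝ) :
    HasDerivAt (fun θ ↦ cos (n * θ - α) - p.eval (cos θ)) (chebGapDeriv n α p θ) θ := by
  have hphase : HasDerivAt (fun θ : ℝ ↦ n * θ - α) n θ := by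
    simpa using ((hasDerivAt_id θ).const_mul (n : ℝ)).sub_const α
  refine (hphase.cos.sub ((p.hasDerivAt _).comp θ (hasDerivAt_cos θ))).congr_deriv ?_
  rw [chebGapDeriv]
  ring

/- `cos (n θ - α)` equals `(-1) ^ j` at `θ = (α + j π) / n`, while `|p| < 1`. -/
theorem exists_chebGapDeriv_alternating (hn : n ≠ 0)
    (hp : ∀ t ∈ Set.Icc (-1 : ℝ) 1, |p.eval t| < 1) (α : ℝ) (j : ℕ) :
    ∃ ξ ∈ Set.Ioo ((α + (j - 1) * π) / n) ((α + j * π) / n),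
      0 < (-1) ^ j * chebGapDeriv n α p ξ := by
  have hn₀ : (0 : ℝ) < n := by positivity
  have hlt : (α + (j - 1) * π) / n < (α + j * π) / n := by
    gcongr
    linarith
  obtain ⟨ξ, hξ, hslope⟩ := exists_hasDerivAt_eq_slope _ (chebGapDeriv n α p) hlt
    (fun θ _ ↦ (hasDerivAt_chebGap n α p θ).continuousAt.continuousWithinAt)
    fun θ _ ↦ hasDerivAt_chebGap n α p θ
  refine ⟨ξ, hξ, ?_⟩
  have hright : cos (n * ((α + j * π) / n) - α) = (-1) ^ j := by
    rw [mul_div_cancel₀ _ hn₀.ne', add_sub_cancel_left, cos_nat_mul_pi]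
  have hleft : cos (n * ((α + (j - 1) * π) / n) - α) = -(-1) ^ j := by
    rw [mul_div_cancel₀ _ hn₀.ne', add_sub_cancel_left, sub_one_mul, cos_sub_pi, cos_nat_mul_pi]
  have hpr := abs_lt.1 (hp _ (cos_mem_Icc ((α + j * π) / n)))
  have hpl := abs_lt.1 (hp _ (cos_mem_Icc ((α + (j - 1) * π) / n)))
  rw [hslope, hright, hleft, ← mul_div_assoc]
  refine div_pos ?_ (sub_pos.2 hlt)
  rcases neg_one_pow_eq_or ℝ j with h | h <;> rw [h] <;> linarith

theorem cos_mem_Ioo_of_mem_Ioo {θ : ℝ} (hθ : θ ∈ Set.Ioo 0 π) : cos θ ∈ Set.Ioo (-1 : ℝ) 1 := by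
  have hsin := sin_pos_of_mem_Ioo hθ
  constructor <;> nlinarith [sin_sq_add_cos_sq θ]

theorem chebGapDeriv_eq_sin_mul {θ : ℝ} (hθ : θ ∈ Set.Ioo 0 π) :
    chebGapDeriv n α p θ
      = sin θ * (p.derivative.eval (cos θ) - iteratedDeriv 1 (chebPhase n α) (cos θ)) := by
  have hsin := sin_pos_of_mem_Ioo hθ
  rw [iteratedDeriv_one_chebPhase (cos_mem_Ioo_of_mem_Ioo hθ), ← sin_sq, sqrt_sq hsin.le, chebPhase,
    arccos_cos hθ.1.le hθ.2.le, ← sub_sub, cos_sub_pi_div_two, chebGapDeriv]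
  field_simp

theorem exists_iteratedDeriv_chebPhase_eq_of_contact {N : ℕ} (hk : k ≠ 0) (hkN : k ≤ N + 1)
    {Z : Finset ℝ} (hZ : ∀ θ ∈ Z, θ ∈ Set.Ioo 0 π ∧ chebGapDeriv n α p θ = 0) (hN : N ≤ Z.card)
    (hx : x ∈ Set.Ioo (-1 : ℝ) 1)
    (hx₀ : (derivative^[k] p).eval x = iteratedDeriv k (chebPhase n α) x)
    (hx₁ : (derivative^[k + 1] p).eval x = iteratedDeriv (k + 1) (chebPhase n α) x) :
    ∃ z ∈ Set.Ioo (-1 : ℝ) 1,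
      (derivative^[N + 1] p).eval z = iteratedDeriv (N + 1) (chebPhase n α) z := by
  classical
  have hinj : Set.InjOn cos Z := injOn_cos.mono fun θ hθ ↦ Set.Ioo_subset_Icc_self (hZ θ hθ).1
  have hzeros : ∀ z ∈ Z.image cos, z ∈ Set.Ioo (-1 : ℝ) 1 ∧
      p.derivative.eval z - iteratedDeriv 1 (chebPhase n α) z = 0 := by
    intro z hz
    obtain ⟨θ, hθ, rfl⟩ := Finset.mem_image.1 hz
    obtain ⟨hmem, hzero⟩ := hZ θ hθ
    rw [chebGapDeriv_eq_sin_mul hmem] at hzero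
    exact ⟨cos_mem_Ioo_of_mem_Ioo hmem,
      (mul_eq_zero.1 hzero).resolve_left (sin_pos_of_mem_Ioo hmem).ne'⟩
  obtain ⟨z, hz, hz₀⟩ := exists_zero_deriv_of_double_zero Set.ordConnected_Ioo
    (g := fun j t ↦ (derivative^[j] p).eval t - iteratedDeriv j (chebPhase n α) t)
    (fun j t ht ↦ (hasDerivAt_eval_iterate_derivative p j t).sub
      (hasDerivAt_iteratedDeriv_chebPhase j ht))
    hk hkN hzeros (hN.trans_eq (Finset.card_image_of_injOn hinj).symm) hx (sub_eq_zero.2 hx₀)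
    (sub_eq_zero.2 hx₁)
  exact ⟨z, hz, sub_eq_zero.1 hz₀⟩

theorem chebGapDeriv_zero_right (n : ℕ) (α : ℝ) (p : ℝ[X]) :
    chebGapDeriv n α p 0 = n * sin α := by
  simp [chebGapDeriv]

theorem neg_one_pow_mul_chebGapDeriv_pi (n : ℕ) (α : ℝ) (p : ℝ[X]) :
    (-1) ^ n * chebGapDeriv n α p π = n * sin α := by
  rw [chebGapDeriv, sin_pi, sin_sub, sin_nat_mul_pi, cos_nat_mul_pi]
  rcases neg_one_pow_eq_or ℝ n with h | h <;> rw [h] <;> ring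

theorem exists_finset_zeros_chebGapDeriv (hn : n ≠ 0)
    (hp : ∀ t ∈ Set.Icc (-1 : ℝ) 1, |p.eval t| < 1) (hα : α ∈ Set.Ioo 0 π) :
    ∃ Z : Finset ℝ, (∀ θ ∈ Z, θ ∈ Set.Ioo 0 π ∧ chebGapDeriv n α p θ = 0) ∧ Z.card = n := by
  have hn₀ : (0 : ℝ) < n := by positivity
  have hsin := sin_pos_of_mem_Ioo hα
  choose ξ hξ hsign using exists_chebGapDeriv_alternating hn hp α
  have hnode_pos (i : ℕ) : 0 < (α + i * π) / n := by have := hα.1; positivity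
  have hnode_lt {i : ℕ} (hi : i < n) : (α + i * π) / n < π := by
    have : (i : ℝ) + 1 ≤ n := by exact_mod_cast hi
    rw [div_lt_iff₀ hn₀]
    nlinarith [hα.2, pi_pos]
  have hnode_lt_succ (i : ℕ) : (α + i * π) / n < ξ (i + 1) := by simpa using (hξ (i + 1)).1
  have hmono : StrictMonoOn (fun i ↦ max 0 (min π (ξ i))) (Set.Iic n) :=
    strictMonoOn_Iic_of_lt_succ fun i hi ↦
      (max_lt (hnode_pos i) ((min_le_right _ _).trans_lt (hξ i).2)).trans
        (lt_max_of_lt_right (lt_min (hnode_lt hi) (hnode_lt_succ i)))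
  have halt : ∀ i ≤ n, 0 < (-1) ^ i * chebGapDeriv n α p (max 0 (min π (ξ i))) := by
    intro i hi
    rcases le_or_gt (ξ i) 0 with h₀ | h₀
    · obtain rfl : i = 0 := by
        by_contra h
        obtain ⟨j, rfl⟩ := Nat.exists_eq_succ_of_ne_zero h
        exact h₀.not_gt ((hnode_pos j).trans (hnode_lt_succ j))
      rw [min_eq_right (h₀.trans pi_pos.le), max_eq_left h₀]
      simpa [chebGapDeriv_zero_right] using mul_pos hn₀ hsin
    rcases le_or_gt π (ξ i) with hπ | hπ
    · obtain rfl : i = n := hi.eq_or_lt.resolve_right fun h ↦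
        ((hξ i).2.trans (hnode_lt h)).not_ge hπ
      rw [min_eq_left hπ, max_eq_right pi_pos.le, neg_one_pow_mul_chebGapDeriv_pi]
      exact mul_pos hn₀ hsin
    · rw [min_eq_right hπ.le, max_eq_right h₀.le]
      exact hsign i
  obtain ⟨Z, hZ, hcard⟩ := exists_finset_zeros_of_alternating continuous_chebGapDeriv n hmono halt
  exact ⟨Z, fun θ hθ ↦ ⟨Set.Ioo_subset_Ioo (le_max_left _ _) (max_le pi_pos.le (min_le_left _ _))
    (hZ θ hθ).1, (hZ θ hθ).2⟩, hcard⟩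

theorem exists_finset_zeros_chebGapDeriv_zero (hp : ∀ t ∈ Set.Icc (-1 : ℝ) 1, |p.eval t| < 1) :
    ∃ Z : Finset ℝ, (∀ θ ∈ Z, θ ∈ Set.Ioo 0 π ∧ chebGapDeriv (n + 1) 0 p θ = 0) ∧ Z.card = n := by
  choose ξ hξ hsign using exists_chebGapDeriv_alternating n.succ_ne_zero hp 0
  have hnode_lt_succ (i : ℕ) : (0 + i * π) / (n + 1 : ℕ) < ξ (i + 1) := by
    simpa using (hξ (i + 1)).1
  obtain ⟨Z, hZ, hcard⟩ := exists_finset_zeros_of_alternating (e := fun i ↦ ξ (i + 1))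
    (continuous_chebGapDeriv (n := n + 1) (α := 0) (p := p)).neg n
    (strictMonoOn_Iic_of_lt_succ fun i _ ↦ (hξ (i + 1)).2.trans (hnode_lt_succ (i + 1)))
    fun i _ ↦ by simpa [pow_succ] using hsign (i + 1)
  refine ⟨Z, fun θ hθ ↦ ?_, hcard⟩
  obtain ⟨hmem, hzero⟩ := hZ θ hθ
  have hfirst := hnode_lt_succ 0
  have hlast := (hξ (n + 1)).2
  rw [zero_add, mul_div_cancel_left₀ _ (Nat.cast_ne_zero.2 n.succ_ne_zero)] at hlast
  exact ⟨⟨(by simpa using hfirst : 0 < ξ (0 + 1)).trans hmem.1, hmem.2.trans hlast⟩,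
    neg_eq_zero.1 hzero⟩

theorem eq_chebyshev_T_of_iterate_derivative_eq
    (hdeg : p.natDegree ≤ n)
    (hp : ∀ t ∈ Set.Icc (-1 : ℝ) 1, |p.eval t| ≤ 1) {z : ℝ}
    (hz : (derivative^[n] p).eval z = (derivative^[n] (Chebyshev.T ℝ n)).eval z) :
    p = Chebyshev.T ℝ n := by
  have hT : (Chebyshev.T ℝ n).natDegree = n := by simp [Chebyshev.natDegree_T]
  rw [eval_iterate_derivative_of_natDegree_le hdeg, eval_iterate_derivative_of_natDegree_le hT.le]
    at hz
  refine (Chebyshev.coeff_eq_iff_of_forall_abs_le_one (natDegree_le_iff_degree_le.1 hdeg) hp).1 ?_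
  rw [mul_left_cancel₀ (Nat.cast_ne_zero.2 n.factorial_ne_zero) hz]
  nth_rw 2 [← hT]
  rw [coeff_natDegree, Chebyshev.leadingCoeff_T]
  simp

theorem eval_iterate_derivative_succ_ne_of_eq_chebPhase_of_mem_Ico (hk : k ≠ 0) (hkn : k ≤ n)
    (hdeg : p.natDegree ≤ n) (hp : ∀ t ∈ Set.Icc (-1 : ℝ) 1, |p.eval t| < 1)
    (hα : α ∈ Set.Ico 0 π) (hx : x ∈ Set.Ioo (-1 : ℝ) 1)
    (hx₀ : (derivative^[k] p).eval x = iteratedDeriv k (chebPhase n α) x) :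
    (derivative^[k + 1] p).eval x ≠ iteratedDeriv (k + 1) (chebPhase n α) x := by
  intro hx₁
  have hn : n ≠ 0 := by omega
  rcases hα.1.eq_or_lt with rfl | hα₀
  · obtain ⟨m, rfl⟩ := Nat.exists_eq_succ_of_ne_zero hn
    obtain ⟨Z, hZ, hcard⟩ := exists_finset_zeros_chebGapDeriv_zero (n := m) hp
    obtain ⟨z, hz, heq⟩ :=
      exists_iteratedDeriv_chebPhase_eq_of_contact hk hkn hZ hcard.ge hx hx₀ hx₁
    rw [iteratedDeriv_chebPhase_zero_right _ hz] at heq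
    have hpT := eq_chebyshev_T_of_iterate_derivative_eq hdeg (fun t ht ↦ (hp t ht).le) heq
    simpa [hpT] using hp 1 (by simp)
  · obtain ⟨Z, hZ, hcard⟩ := exists_finset_zeros_chebGapDeriv hn hp ⟨hα₀, hα.2⟩
    obtain ⟨z, hz, heq⟩ :=
      exists_iteratedDeriv_chebPhase_eq_of_contact hk (by omega) hZ hcard.ge hx hx₀ hx₁
    rw [iterate_derivative_eq_zero (by omega), eval_zero, iteratedDeriv_chebPhase_eq_add _ _ hz,
      iteratedDeriv_succ_chebPhase_zero_right hz, mul_zero, zero_add, eq_comm, mul_eq_zero] at heq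
    exact heq.elim (sin_pos_of_mem_Ioo ⟨hα₀, hα.2⟩).ne'
      (iteratedDeriv_succ_chebPhase_pi_div_two_ne_zero hn hz)

theorem iteratedDeriv_chebPhase_sub_zsmul_pi (j : ℕ) (α : ℝ) (m : ℤ)
    (ht : x ∈ Set.Ioo (-1 : ℝ) 1) :
    iteratedDeriv j (chebPhase n (α - m • π)) x
      = (-1) ^ m * iteratedDeriv j (chebPhase n α) x := by
  rw [iteratedDeriv_chebPhase_eq_add j _ ht, iteratedDeriv_chebPhase_eq_add j α ht, zsmul_eq_mul,
    cos_sub_int_mul_pi, sin_sub_int_mul_pi]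
  ring

theorem eval_iterate_derivative_succ_ne_of_eq_chebPhase (hk : k ≠ 0) (hkn : k ≤ n)
    (hdeg : p.natDegree ≤ n)
    (hp : ∀ t ∈ Set.Icc (-1 : ℝ) 1, |p.eval t| < 1) (hx : x ∈ Set.Ioo (-1 : ℝ) 1)
    (hx₀ : (derivative^[k] p).eval x = iteratedDeriv k (chebPhase n α) x) :
    (derivative^[k + 1] p).eval x ≠ iteratedDeriv (k + 1) (chebPhase n α) x := by
  intro hx₁
  obtain ⟨m, hm, -⟩ := existsUnique_sub_zsmul_mem_Ico pi_pos α 0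
  rw [zero_add] at hm
  refine eval_iterate_derivative_succ_ne_of_eq_chebPhase_of_mem_Ico (p := C ((-1) ^ m) * p) hk hkn
    ((natDegree_C_mul_le _ _).trans hdeg) (fun t ht ↦ ?_) hm hx ?_ ?_
  · simpa [abs_mul, abs_zpow] using hp t ht
  · rw [iterate_derivative_C_mul, eval_C_mul, hx₀, iteratedDeriv_chebPhase_sub_zsmul_pi _ _ _ hx]
  · rw [iterate_derivative_C_mul, eval_C_mul, hx₁, iteratedDeriv_chebPhase_sub_zsmul_pi _ _ _ hx]

theorem exists_cos_sin_eq_of_sq_add_sq_eq_one {c s : ℝ} (h : c ^ 2 + s ^ 2 = 1) :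
    ∃ α, cos α = c ∧ sin α = s := by
  have hnorm : ‖(c + s * Complex.I : ℂ)‖ = 1 := by rw [Complex.norm_add_mul_I, h, sqrt_one]
  exact ⟨Complex.arg (c + s * Complex.I),
    by simpa [hnorm] using Complex.norm_mul_cos_arg (c + s * Complex.I),
    by simpa [hnorm] using Complex.norm_mul_sin_arg (c + s * Complex.I)⟩

theorem mul_eval_iterate_derivative_succ_ne_of_sq_eq_chebM (hk : k ≠ 0) (hkn : k ≤ n)
    (hdeg : p.natDegree ≤ n)
    (hp : ∀ t ∈ Set.Icc (-1 : ℝ) 1, |p.eval t| < 1) (hx : x ∈ Set.Ioo (-1 : ℝ) 1)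
    (hx₀ : (derivative^[k] p).eval x ^ 2 = chebM n k x) :
    (derivative^[k] p).eval x * (derivative^[k + 1] p).eval x
      ≠ iteratedDeriv k (chebPhase n 0) x * iteratedDeriv (k + 1) (chebPhase n 0) x
        + iteratedDeriv k (chebPhase n (π / 2)) x
          * iteratedDeriv (k + 1) (chebPhase n (π / 2)) x := by
  intro hx₁
  obtain ⟨i, rfl⟩ := Nat.exists_eq_add_one_of_ne_zero hk
  set f := (derivative^[i + 1] p).eval x
  have hpos := chebM_succ_pos (by omega : n ≠ 0) (by omega : i ≤ n) hx
  have hf : f ≠ 0 := fun h ↦ hpos.ne (by simpa [h] using hx₀)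
  rw [chebM_eq_sq_add_sq] at hx₀
  obtain ⟨α, hcos, hsin⟩ := exists_cos_sin_eq_of_sq_add_sq_eq_one
    (c := iteratedDeriv (i + 1) (chebPhase n 0) x / f)
    (s := iteratedDeriv (i + 1) (chebPhase n (π / 2)) x / f) <| by
      rw [div_pow, div_pow, ← add_div, ← hx₀, div_self (pow_ne_zero 2 hf)]
  refine eval_iterate_derivative_succ_ne_of_eq_chebPhase (α := α) hk hkn hdeg hp hx ?_ ?_ <;>
    rw [iteratedDeriv_chebPhase_eq_add _ _ hx, hcos, hsin, div_mul_eq_mul_div, div_mul_eq_mul_div,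
      ← add_div, eq_div_iff hf]
  · rw [← sq, ← sq, ← sq, hx₀]
  · rw [← hx₁, mul_comm]

end Contact

/-! ### Derivatives of polynomials bounded on an interval -/

section Interval

open Polynomial Real

variable {n k : ℕ}

/- The scaling factor comes from the maximum of `f ^ 2 / chebM n (k + 1)`, which extends
continuously by `0` to the end points `±1`. -/
theorem exists_scaling_touching_chebM {f : ℝ → ℝ} (hf : Continuous f) (hn : n ≠ 0) (hk : k ≤ n)
    {s : ℝ} (hs : s ∈ Set.Ioo (-1 : ℝ) 1) (hlt : chebM n (k + 1) s < f s ^ 2) :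
    ∃ l ∈ Set.Ioo (0 : ℝ) 1, ∃ x ∈ Set.Ioo (-1 : ℝ) 1, (l * f x) ^ 2 = chebM n (k + 1) x ∧
      ∀ t ∈ Set.Ioo (-1 : ℝ) 1, (l * f t) ^ 2 ≤ chebM n (k + 1) t := by
  set R : ℝ → ℝ := fun t ↦ f t ^ 2 * (1 - t ^ 2) ^ (2 * k + 1) / chebMNumerator n k t with hR
  have hcont : ContinuousOn R (Set.Icc (-1) 1) :=
    ContinuousOn.div (by fun_prop) (continuous_chebMNumerator n k).continuousOn
      fun t ht ↦ (chebMNumerator_pos hn hk ht).ne'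
  have hRf {t : ℝ} (ht : t ∈ Set.Ioo (-1 : ℝ) 1) : R t * chebM n (k + 1) t = f t ^ 2 := by
    have hw := one_sub_sq_pos_of_mem_Ioo ht
    have hM := chebM_succ_pos hn hk ht
    simp only [hR, ← chebM_succ_mul_pow n k ht]
    field_simp
  obtain ⟨x, hx, hmax⟩ := isCompact_Icc.exists_isMaxOn ⟨0, by simp⟩ hcont
  have hRx : 1 < R x := by
    have hRs : 1 < R s := by
      rw [← hRf hs] at hlt
      exact (lt_mul_iff_one_lt_left (chebM_succ_pos hn hk hs)).1 hlt
    exact hRs.trans_le (hmax (Set.Ioo_subset_Icc_self hs))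
  have hx' : x ∈ Set.Ioo (-1 : ℝ) 1 := by
    have hne : 1 - x ^ 2 ≠ 0 := fun h ↦ by norm_num [hR, h] at hRx
    exact ⟨hx.1.lt_of_ne fun h ↦ hne (by norm_num [← h]),
      hx.2.lt_of_ne fun h ↦ hne (by norm_num [h])⟩
  have hscale (t : ℝ) : ((√(R x))⁻¹ * f t) ^ 2 = f t ^ 2 / R x := by
    rw [mul_pow, inv_pow, sq_sqrt (by positivity), inv_mul_eq_div]
  refine ⟨(√(R x))⁻¹, ⟨by positivity, inv_lt_one_of_one_lt₀ ?_⟩, x, hx', ?_, fun t ht ↦ ?_⟩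
  · rwa [lt_sqrt zero_le_one, one_pow]
  · rw [hscale, ← hRf hx', mul_div_cancel_left₀ _ (by positivity)]
  · rw [hscale, ← hRf ht, div_le_iff₀ (by positivity), mul_comm]
    exact mul_le_mul_of_nonneg_left (hmax (Set.Ioo_subset_Icc_self ht)) (chebM_nonneg _ _ _)

theorem mul_deriv_eq_of_isLocalMax_sq_sub_chebM {f : ℝ → ℝ} {f' x : ℝ} (hf : HasDerivAt f f' x)
    (hx : x ∈ Set.Ioo (-1 : ℝ) 1) (hmax : IsLocalMax (fun t ↦ f t ^ 2 - chebM n k t) x) :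
    f x * f' = iteratedDeriv k (chebPhase n 0) x * iteratedDeriv (k + 1) (chebPhase n 0) x
      + iteratedDeriv k (chebPhase n (π / 2)) x
        * iteratedDeriv (k + 1) (chebPhase n (π / 2)) x := by
  have hD (α : ℝ) := (hasDerivAt_iteratedDeriv_chebPhase (ν := n) (α := α) k hx).pow 2
  simp only [chebM_eq_sq_add_sq] at hmax
  have hzero := hmax.hasDerivAt_eq_zero ((hf.pow 2).sub ((hD 0).add (hD (π / 2))))
  push_cast at hzero
  linear_combination hzero / 2

theorem sq_eval_iterate_derivative_le_chebM (hk : k ≠ 0) (hkn : k ≤ n) {p : ℝ[X]}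
    (hdeg : p.natDegree ≤ n) (hp : ∀ t ∈ Set.Icc (-1 : ℝ) 1, |p.eval t| ≤ 1) {t : ℝ}
    (ht : t ∈ Set.Ioo (-1 : ℝ) 1) : (derivative^[k] p).eval t ^ 2 ≤ chebM n k t := by
  obtain ⟨i, rfl⟩ := Nat.exists_eq_add_one_of_ne_zero hk
  by_contra! hlt
  obtain ⟨l, hl, x, hx, heq, hle⟩ := exists_scaling_touching_chebM
    (derivative^[i + 1] p).continuous (by omega : n ≠ 0) (by omega : i ≤ n) ht hlt
  have heval (j : ℕ) (s : ℝ) :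
      (derivative^[j] (C l * p)).eval s = l * (derivative^[j] p).eval s := by
    rw [iterate_derivative_C_mul, eval_C_mul]
  simp only [← heval] at heq hle
  refine mul_eval_iterate_derivative_succ_ne_of_sq_eq_chebM (p := C l * p) hk hkn
    ((natDegree_C_mul_le _ _).trans hdeg)
    (fun s hs ↦ ?_) hx heq ?_
  · rw [eval_C_mul, abs_mul, abs_of_pos hl.1]
    exact mul_lt_one_of_nonneg_of_lt_one_left hl.1.le hl.2 (hp s hs)
  · refine mul_deriv_eq_of_isLocalMax_sq_sub_chebM
      (hasDerivAt_eval_iterate_derivative (C l * p) (i + 1) x) hx ?_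
    filter_upwards [isOpen_Ioo.mem_nhds hx] with s hs
    rw [heq, sub_self]
    exact sub_nonpos.2 (hle s hs)

/-- The scaling by `r` is the effect of restricting to a chord of half-length `r` of the unit
ball, whose point with parameter `t` lies at distance `s` from the centre. -/
theorem sq_eval_iterate_derivative_le_mul_chebM {p : ℝ[X]} (hdeg : p.natDegree ≤ n)
    (hp : ∀ t ∈ Set.Icc (-1 : ℝ) 1, |p.eval t| ≤ 1) (k : ℕ) {r s t : ℝ}
    (ht : t ∈ Set.Ioo (-1 : ℝ) 1) (hs : s ∈ Set.Ioo (-1 : ℝ) 1) (hr : r ^ 2 ≤ 1)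
    (hrs : (1 - t ^ 2) * r ^ 2 = 1 - s ^ 2) :
    (derivative^[k] p).eval t ^ 2 ≤ (r ^ k) ^ 2 * chebM n k s := by
  rcases eq_or_ne k 0 with rfl | hk
  · simpa [chebM_zero_right] using hp t (Set.Ioo_subset_Icc_self ht)
  rcases lt_or_ge n k with hkn | hkn
  · rw [iterate_derivative_eq_zero (hdeg.trans_lt hkn), eval_zero, zero_pow two_ne_zero]
    exact mul_nonneg (sq_nonneg _) (chebM_nonneg _ _ _)
  obtain ⟨i, rfl⟩ := Nat.exists_eq_add_one_of_ne_zero hk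
  exact (sq_eval_iterate_derivative_le_chebM hk hkn hdeg hp ht).trans
    (chebM_succ_le_of_one_sub_sq_mul_sq (by omega) ht hs hr hrs)

end Interval

/-! ### Banach's theorem on symmetric multilinear forms -/

theorem sum_update_update {ι E : Type*} [Fintype ι] [DecidableEq ι] [AddCommGroup E] (y : ι → E)
    {i j : ι} (hij : i ≠ j) (p q : E) :
    ∑ l, Function.update (Function.update y i p) j q l = p + q + ∑ l ∈ {j}ᶜ \ {i}, y l := by
  rw [Finset.sum_update_of_mem (Finset.mem_univ j), ← Finset.compl_eq_univ_sdiff,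
    Finset.sum_update_of_mem (by simpa using hij)]
  abel

theorem norm_le_of_norm_apply_le_of_norm_eq_one {ι E : Type*} [Fintype ι] [NormedAddCommGroup E]
    [NormedSpace ℝ E] {A : ContinuousMultilinearMap ℝ (fun _ : ι ↦ E) ℝ}
    {C : ℝ} (hC₀ : 0 ≤ C) (hC : ∀ v : ι → E, (∀ i, ‖v i‖ = 1) → ‖A v‖ ≤ C) : ‖A‖ ≤ C := by
  refine A.opNorm_le_bound hC₀ fun v ↦ ?_
  by_cases hv : ∃ i, v i = 0
  · obtain ⟨i, hi⟩ := hv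
    rw [A.map_coord_zero i hi, norm_zero]
    positivity
  push Not at hv
  have hunit := hC (fun i ↦ ‖v i‖⁻¹ • v i) fun i ↦ norm_smul_inv_norm (hv i)
  have hpos : 0 < ∏ i, ‖v i‖ := Finset.prod_pos fun i _ ↦ norm_pos_iff.2 (hv i)
  rwa [A.map_smul_univ, norm_smul, Finset.prod_inv_distrib, norm_inv,
    Real.norm_of_nonneg hpos.le, inv_mul_le_iff₀ hpos, mul_comm] at hunit

theorem abs_apply_self_le_of_norm_eq_one {E : Type*} [NormedAddCommGroup E] [NormedSpace ℝ E]
    {B : LinearMap.BilinForm ℝ E} {M : ℝ} (hM : ∀ p, ‖p‖ = 1 → |B p p| ≤ M) (p : E) :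
    |B p p| ≤ M * ‖p‖ ^ 2 := by
  rcases eq_or_ne p 0 with rfl | hp
  · simp
  have hunit := hM (‖p‖⁻¹ • p) (norm_smul_inv_norm hp)
  rwa [map_smul, map_smul, LinearMap.smul_apply, smul_smul, smul_eq_mul, abs_mul, ← mul_inv,
    ← sq, abs_of_nonneg (by positivity), inv_mul_le_iff₀ (by positivity), mul_comm] at hunit

section TwoSlotForm

variable {R ι M : Type*} [CommRing R] [AddCommGroup M] [Module R M] [DecidableEq ι]

/-- The bilinear form obtained from a multilinear form by freezing all arguments except those with
the distinct indices `i` and `j`. -/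
def twoSlotForm (A : MultilinearMap R (fun _ : ι ↦ M) R) (y : ι → M) {i j : ι} (hij : i ≠ j) :
    LinearMap.BilinForm R M :=
  LinearMap.mk₂ R (fun p q ↦ A (Function.update (Function.update y i p) j q))
    (fun p p' q ↦ by simp only [Function.update_comm hij, A.map_update_add])
    (fun c p q ↦ by simp only [Function.update_comm hij, A.map_update_smul])
    (fun p q q' ↦ A.map_update_add _ _ _ _)
    (fun c p q ↦ A.map_update_smul _ _ _ _)

theorem twoSlotForm_apply (A : MultilinearMap R (fun _ : ι ↦ M) R) (y : ι → M) {i j : ι}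
    (hij : i ≠ j) (p q : M) :
    twoSlotForm A y hij p q = A (Function.update (Function.update y i p) j q) :=
  rfl

theorem twoSlotForm_isSymm {A : MultilinearMap R (fun _ : ι ↦ M) R}
    (hA : ∀ (v : ι → M) (σ : Equiv.Perm ι), A (v ∘ σ) = A v) (y : ι → M) {i j : ι} (hij : i ≠ j) :
    (twoSlotForm A y hij).IsSymm := by
  refine ⟨fun p q ↦ ?_⟩
  rw [twoSlotForm_apply, twoSlotForm_apply, ← hA _ (Equiv.swap i j)]
  congr 1
  funext l
  rcases eq_or_ne l i with rfl | hi
  · simp [hij]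
  rcases eq_or_ne l j with rfl | hj
  · simp [hij]
  · simp [Equiv.swap_apply_of_ne_of_ne hi hj, hi, hj]

end TwoSlotForm

section Banach

variable {ι E : Type*} [NormedAddCommGroup E] [InnerProductSpace ℝ E] {a b w : E}

theorem norm_sub_sq_of_norm_eq_one (ha : ‖a‖ = 1) (hb : ‖b‖ = 1) :
    ‖a - b‖ ^ 2 = 4 - ‖a + b‖ ^ 2 := by
  rw [norm_add_sq_real, norm_sub_sq_real, ha, hb]
  ring

theorem abs_apply_add_self_of_abs_apply_eq {B : LinearMap.BilinForm ℝ E} (hB : B.IsSymm) {M : ℝ}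
    (hM : ∀ p, |B p p| ≤ M * ‖p‖ ^ 2) (ha : ‖a‖ = 1) (hb : ‖b‖ = 1) (hab : |B a b| = M) :
    |B (a + b) (a + b)| = M * ‖a + b‖ ^ 2 := by
  have hpolar : B (a + b) (a + b) = 4 * B a b + B (a - b) (a - b) := by
    simp only [map_add, map_sub, LinearMap.add_apply, LinearMap.sub_apply, hB.eq b a]
    ring
  have hsub := hM (a - b)
  rw [norm_sub_sq_of_norm_eq_one ha hb] at hsub
  have htri := abs_add_le (B (a + b) (a + b)) (-B (a - b) (a - b))
  rw [← sub_eq_add_neg, hpolar, add_sub_cancel_right, abs_mul, hab, abs_neg, ← hpolar,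
    abs_of_pos four_pos] at htri
  linarith [hM (a + b)]

theorem eq_of_norm_add_add_le (ha : ‖a‖ = 1) (hb : ‖b‖ = 1)
    (hneg : ‖-a + -b + w‖ ≤ ‖a + b + w‖) (hneg_left : ‖-a + b + w‖ ≤ ‖a + b + w‖)
    (hneg_right : ‖a + -b + w‖ ≤ ‖a + b + w‖)
    (hmid : a + b ≠ 0 → ‖‖a + b‖⁻¹ • (a + b) + ‖a + b‖⁻¹ • (a + b) + w‖ ≤ ‖a + b + w‖) :
    a = b := by
  rw [← sq_le_sq₀ (norm_nonneg _) (norm_nonneg _)] at hneg hneg_left hneg_right hmid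
  rcases eq_or_ne (a + b) 0 with h₀ | h₀
  · obtain rfl : b = -a := (neg_eq_of_add_eq_zero_right h₀).symm
    rw [← two_smul ℝ, h₀, zero_add, norm_add_sq_real, norm_smul, norm_neg, ha, inner_smul_left,
      inner_neg_left] at hneg_left
    rw [neg_neg, ← two_smul ℝ, h₀, zero_add, norm_add_sq_real, norm_smul, ha,
      inner_smul_left] at hneg_right
    norm_num at hneg_left hneg_right
    linarith
  have hr : 0 < ‖a + b‖ := norm_pos_iff.2 h₀
  have hr₂ : ‖a + b‖ ≤ 2 := (norm_add_le a b).trans_eq (by rw [ha, hb, one_add_one_eq_two])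
  have hmid := hmid h₀
  rw [← neg_add, norm_add_sq_real, norm_add_sq_real (a + b), norm_neg, inner_neg_left] at hneg
  rw [← two_smul ℝ, smul_smul, norm_add_sq_real, norm_add_sq_real (a + b), norm_smul,
    inner_smul_left, norm_mul, norm_inv, norm_norm, mul_assoc ‖_‖, inv_mul_cancel₀ hr.ne'] at hmid
  norm_num at hmid
  have hinv : 1 ≤ 2 * ‖a + b‖⁻¹ := by rwa [← div_eq_mul_inv, one_le_div hr]
  have hzero : ‖a - b‖ ^ 2 ≤ 0 := by
    rw [norm_sub_sq_of_norm_eq_one ha hb]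
    nlinarith
  exact sub_eq_zero.1 (norm_eq_zero.1 (pow_eq_zero_iff two_ne_zero |>.1
    (hzero.antisymm (sq_nonneg _))))

theorem eq_of_isMax_norm_add_add {B : LinearMap.BilinForm ℝ E} (hB : B.IsSymm) {M : ℝ}
    (hM : ∀ p, |B p p| ≤ M * ‖p‖ ^ 2) (ha : ‖a‖ = 1) (hb : ‖b‖ = 1) (hab : |B a b| = M)
    (hmax : ∀ p q, ‖p‖ = 1 → ‖q‖ = 1 → |B p q| = M → ‖p + q + w‖ ≤ ‖a + b + w‖) : a = b := by
  refine eq_of_norm_add_add_le ha hb (hmax _ _ (by simpa) (by simpa) (by simpa))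
    (hmax _ _ (by simpa) hb (by simpa)) (hmax _ _ ha (by simpa) (by simpa)) fun h₀ ↦ ?_
  have hunit : ‖‖a + b‖⁻¹ • (a + b)‖ = 1 := norm_smul_inv_norm h₀
  refine hmax _ _ hunit hunit ?_
  have hr := norm_ne_zero_iff.2 h₀
  rw [map_smul, map_smul, LinearMap.smul_apply, smul_smul, smul_eq_mul, abs_mul,
    abs_apply_add_self_of_abs_apply_eq hB hM ha hb hab, abs_of_nonneg (by positivity)]
  field_simp

theorem apply_eq_of_isMax_norm_sum [Fintype ι] {A : MultilinearMap ℝ (fun _ : ι ↦ E) ℝ}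
    (hA : ∀ (v : ι → E) (σ : Equiv.Perm ι), A (v ∘ σ) = A v) {y : ι → E} (hy : ∀ i, ‖y i‖ = 1)
    (hmax : ∀ v : ι → E, (∀ i, ‖v i‖ = 1) → |A v| ≤ |A y|)
    (hsum : ∀ v : ι → E, (∀ i, ‖v i‖ = 1) → |A v| = |A y| → ‖∑ i, v i‖ ≤ ‖∑ i, y i‖) (i j : ι) :
    y i = y j := by
  classical
  by_contra hne
  have hij : i ≠ j := fun h ↦ hne (by rw [h])
  have hunit {p q : E} (hp : ‖p‖ = 1) (hq : ‖q‖ = 1) (l : ι) :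
      ‖Function.update (Function.update y i p) j q l‖ = 1 := by
    rcases eq_or_ne l j with rfl | hj
    · simpa
    rcases eq_or_ne l i with rfl | hi
    · simpa [hj]
    · simpa [hi, hj] using hy l
  have hself : Function.update (Function.update y i (y i)) j (y j) = y := by simp
  refine hne (eq_of_isMax_norm_add_add (twoSlotForm_isSymm hA y hij)
    (abs_apply_self_le_of_norm_eq_one fun p hp ↦ hmax _ (hunit hp hp)) (hy i) (hy j)
    (by rw [twoSlotForm_apply, hself]) (w := ∑ l ∈ {j}ᶜ \ {i}, y l) fun p q hp hq hpq ↦ ?_)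
  have hle := hsum _ (hunit hp hq) hpq
  rwa [← congrArg (fun z : ι → E ↦ ∑ l, z l) hself, sum_update_update y hij,
    sum_update_update y hij] at hle

/-- Among the unit tuples at which `|A|` is maximal, take one for which the sum of the vectors is
longest: the symmetry of `A` forces its vectors to coincide. -/
theorem norm_apply_le_of_norm_diagonal_le_of_finiteDimensional [Finite ι]
    [FiniteDimensional ℝ E] {A : ContinuousMultilinearMap ℝ (fun _ : ι ↦ E) ℝ}
    (hA : ∀ (v : ι → E) (σ : Equiv.Perm ι), A (v ∘ σ) = A v) {C : ℝ}
    (hC : ∀ e, ‖e‖ ≤ 1 → ‖A fun _ ↦ e‖ ≤ C) {v : ι → E} (hv : ∀ i, ‖v i‖ = 1) : ‖A v‖ ≤ C := by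
  have := Fintype.ofFinite ι
  set K : Set (ι → E) := Set.univ.pi fun _ ↦ sphere 0 1
  have hmemK {y : ι → E} : y ∈ K ↔ ∀ i, ‖y i‖ = 1 := by simp [K]
  have hK : IsCompact K := isCompact_univ_pi fun _ ↦ isCompact_sphere 0 1
  have hAcont : Continuous fun y : ι → E ↦ |A y| := A.cont.abs
  obtain ⟨y₀, hy₀, hmax⟩ := hK.exists_isMaxOn ⟨v, hmemK.2 hv⟩ hAcont.continuousOn
  obtain ⟨y, ⟨hyK, hyA⟩, hsum⟩ :=
    (hK.inter_right (isClosed_eq hAcont (continuous_const (y := |A y₀|)))).exists_isMaxOn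
      ⟨y₀, hy₀, rfl⟩ (by fun_prop : Continuous fun y : ι → E ↦ ‖∑ i, y i‖).continuousOn
  have hyA : |A y| = |A y₀| := hyA
  have hconst := apply_eq_of_isMax_norm_sum (A := A.toMultilinearMap) hA (hmemK.1 hyK)
    (fun u hu ↦ (hmax (hmemK.2 hu)).trans_eq hyA.symm)
    fun u hu huA ↦ hsum ⟨hmemK.2 hu, huA.trans hyA⟩
  obtain ⟨e, he, hye⟩ : ∃ e, ‖e‖ ≤ 1 ∧ y = fun _ ↦ e := by
    rcases isEmpty_or_nonempty ι with _ | ⟨⟨i⟩⟩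
    · exact ⟨0, by simp, Subsingleton.elim _ _⟩
    · exact ⟨y i, (hmemK.1 hyK i).le, funext fun l ↦ hconst l i⟩
  calc ‖A v‖ ≤ |A y₀| := hmax (hmemK.2 hv)
    _ = |A fun _ ↦ e| := by rw [← hyA, hye]
    _ ≤ C := hC e he

theorem norm_apply_le_of_norm_diagonal_le [Finite ι]
    {A : ContinuousMultilinearMap ℝ (fun _ : ι ↦ E) ℝ}
    (hA : ∀ (v : ι → E) (σ : Equiv.Perm ι), A (v ∘ σ) = A v) {C : ℝ}
    (hC : ∀ e, ‖e‖ ≤ 1 → ‖A fun _ ↦ e‖ ≤ C) {v : ι → E} (hv : ∀ i, ‖v i‖ = 1) : ‖A v‖ ≤ C := by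
  set W := Submodule.span ℝ (Set.range v)
  have : FiniteDimensional ℝ W := FiniteDimensional.span_of_finite ℝ (Set.finite_range v)
  exact norm_apply_le_of_norm_diagonal_le_of_finiteDimensional
    (A := A.compContinuousLinearMap fun _ ↦ W.subtypeL) (fun u σ ↦ hA (fun i ↦ u i) σ)
    (fun e ↦ hC e) (v := fun i ↦ ⟨v i, Submodule.subset_span ⟨i, rfl⟩⟩) hv

theorem norm_eq_sSup_norm_diagonal [Fintype ι]
    {A : ContinuousMultilinearMap ℝ (fun _ : ι ↦ E) ℝ}
    (hA : ∀ (v : ι → E) (σ : Equiv.Perm ι), A (v ∘ σ) = A v) :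
    ‖A‖ = sSup ((fun e ↦ ‖A fun _ ↦ e‖) '' closedBall 0 1) := by
  have hle : ∀ r ∈ (fun e ↦ ‖A fun _ ↦ e‖) '' closedBall 0 1, r ≤ ‖A‖ := by
    rintro _ ⟨e, he, rfl⟩
    exact A.unit_le_opNorm ((pi_norm_const_le e).trans (mem_closedBall_zero_iff.1 he))
  have hdiag (e : E) (he : ‖e‖ ≤ 1) :
      ‖A fun _ ↦ e‖ ≤ sSup ((fun e ↦ ‖A fun _ ↦ e‖) '' closedBall 0 1) :=
    le_csSup ⟨_, hle⟩ ⟨e, mem_closedBall_zero_iff.2 he, rfl⟩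
  refine le_antisymm (norm_le_of_norm_apply_le_of_norm_eq_one ?_ fun v ↦
    norm_apply_le_of_norm_diagonal_le hA hdiag) (csSup_le ⟨_, 0, by simp, rfl⟩ hle)
  exact (norm_nonneg _).trans (hdiag 0 (by simp))

end Banach

/-! ### Continuous polynomials -/

section ContinuousPolynomial

open Polynomial

variable {E : Type*} [NormedAddCommGroup E] [NormedSpace ℝ E]

/-- `P` is a continuous real polynomial of degree at most `n`: a sum of restrictions to the diagonal
of continuous `j`-linear forms, `j ≤ n`. The forms need not be symmetric, since symmetrizing them
does not change `P`. -/
def IsContinuousPolynomial (n : ℕ) (P : E → ℝ) : Prop :=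
  ∃ L : (j : Fin (n + 1)) → ContinuousMultilinearMap ℝ (fun _ : Fin (j : ℕ) ↦ E) ℝ,
    ∀ x, P x = ∑ j, L j fun _ ↦ x

theorem exists_polynomial_eval_eq_apply_line {R ι M : Type*} [CommSemiring R] [Fintype ι]
    [AddCommMonoid M] [Module R M] (L : MultilinearMap R (fun _ : ι ↦ M) R) (c z : M) :
    ∃ p : R[X], p.natDegree ≤ Fintype.card ι ∧ ∀ t, p.eval t = L fun _ ↦ c + t • z := by
  classical
  refine ⟨∑ s : Finset ι, C (L (s.piecewise (fun _ ↦ z) fun _ ↦ c)) * X ^ s.card,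
    natDegree_sum_le_of_forall_le _ _ fun s _ ↦
      (natDegree_C_mul_X_pow_le _ _).trans s.card_le_univ, fun t ↦ ?_⟩
  have hsplit (s : Finset ι) : L (s.piecewise (fun _ ↦ t • z) fun _ ↦ c)
      = t ^ s.card * L (s.piecewise (fun _ ↦ z) fun _ ↦ c) := by
    rw [← smul_eq_mul, ← Finset.prod_const, ← L.map_piecewise_smul]
    congr 1
    funext i
    by_cases hi : i ∈ s <;> simp [hi]
  have hadd := L.map_add_univ (fun _ ↦ t • z) fun _ ↦ c
  simp only [hsplit] at hadd
  simpa [eval_finsetSum, Pi.add_def, add_comm c, mul_comm (t ^ _)] using hadd.symm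

theorem IsContinuousPolynomial.contDiff {n : ℕ} {P : E → ℝ}
    (hP : IsContinuousPolynomial n P) {m : WithTop ℕ∞} : ContDiff ℝ m P := by
  obtain ⟨L, hL⟩ := hP
  rw [funext hL]
  exact ContDiff.sum fun j _ ↦ (L j).contDiff.comp (contDiff_pi.2 fun _ ↦ contDiff_id)

theorem IsContinuousPolynomial.exists_polynomial_eval_eq {n : ℕ} {P : E → ℝ}
    (hP : IsContinuousPolynomial n P) (c z : E) :
    ∃ p : ℝ[X], p.natDegree ≤ n ∧ ∀ t, p.eval t = P (c + t • z) := by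
  obtain ⟨L, hL⟩ := hP
  choose p hdeg heval using fun j ↦
    exists_polynomial_eval_eq_apply_line (L j).toMultilinearMap c z
  refine ⟨∑ j, p j, natDegree_sum_le_of_forall_le _ _ fun j _ ↦ (hdeg j).trans ?_, fun t ↦ ?_⟩
  · simpa using j.is_le
  · rw [eval_finsetSum, hL]
    exact Finset.sum_congr rfl fun j _ ↦ heval j t

theorem iteratedDeriv_comp_line {F : Type*} [NormedAddCommGroup F] [NormedSpace ℝ F] {f : E → F}
    {k : ℕ} (hf : ContDiff ℝ k f) (c z : E) (t : ℝ) :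
    iteratedDeriv k (fun s ↦ f (c + s • z)) t = iteratedFDeriv ℝ k f (c + t • z) fun _ ↦ z := by
  have hshift : ContDiff ℝ k fun y ↦ f (c + y) := hf.comp (contDiff_const.add contDiff_id)
  have hcomp := (ContinuousLinearMap.toSpanSingleton ℝ z).iteratedFDeriv_comp_right hshift t
    (i := k) le_rfl
  rw [iteratedFDeriv_comp_add_left] at hcomp
  rw [iteratedDeriv_eq_iteratedFDeriv]
  simpa [Function.comp_def] using congrArg (fun A ↦ A fun _ ↦ (1 : ℝ)) hcomp

end ContinuousPolynomial

section Hilbert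

open Polynomial Real

variable {H : Type*} [NormedAddCommGroup H] [InnerProductSpace ℝ H]

/-- For a unit vector `e` the points `c + s • r • e` with `|s| ≤ 1` form the chord of the unit ball
through `x` in the direction `e`. -/
theorem exists_chord_through {x e : H} (hx : ‖x‖ < 1) (he : ‖e‖ ≤ 1) :
    ∃ (c : H) (r t : ℝ), 0 < r ∧ r ^ 2 ≤ 1 ∧ t ∈ Set.Ioo (-1) 1 ∧ c + t • r • e = x ∧
      (1 - t ^ 2) * r ^ 2 = 1 - ‖x‖ ^ 2 ∧ ∀ s ∈ Set.Icc (-1 : ℝ) 1, ‖c + s • r • e‖ ≤ 1 := by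
  set a : ℝ := inner ℝ x e
  have ha : a ^ 2 ≤ ‖x‖ ^ 2 := by
    refine sq_le_sq.2 ((abs_real_inner_le_norm x e).trans ?_)
    rw [abs_norm]
    exact mul_le_of_le_one_right (norm_nonneg x) he
  have hx₂ : ‖x‖ ^ 2 < 1 := pow_lt_one₀ (norm_nonneg x) hx two_ne_zero
  have hpos : 0 < 1 - ‖x‖ ^ 2 + a ^ 2 := by linarith [sq_nonneg a]
  set r := √(1 - ‖x‖ ^ 2 + a ^ 2)
  have hr : 0 < r := sqrt_pos.2 hpos
  have hr₂ : r ^ 2 = 1 - ‖x‖ ^ 2 + a ^ 2 := sq_sqrt hpos.le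
  have hta : a / r * r = a := div_mul_cancel₀ a hr.ne'
  have hrel : (1 - (a / r) ^ 2) * r ^ 2 = 1 - ‖x‖ ^ 2 := by
    rw [sub_mul, ← mul_pow, hta]
    linarith
  refine ⟨x - a • e, r, a / r, hr, by linarith, ?_, ?_, hrel, fun s hs ↦ ?_⟩
  · have := pos_of_mul_pos_left (hrel.symm ▸ sub_pos.2 hx₂) (sq_nonneg r)
    exact abs_lt.1 ((sq_lt_one_iff_abs_lt_one _).1 (by linarith))
  · rw [smul_smul, hta, sub_add_cancel]
  · have hs₂ : s ^ 2 * r ^ 2 ≤ r ^ 2 :=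
      mul_le_of_le_one_left (sq_nonneg r) ((sq_le_one_iff_abs_le_one s).2 (abs_le.2 hs))
    have he₂ : (s * r - a) ^ 2 * ‖e‖ ^ 2 ≤ (s * r - a) ^ 2 :=
      mul_le_of_le_one_right (sq_nonneg _) (pow_le_one₀ (norm_nonneg e) he)
    refine (sq_le_one_iff₀ (norm_nonneg _)).1 ?_
    calc ‖x - a • e + s • r • e‖ ^ 2 = ‖x + (s * r - a) • e‖ ^ 2 := by congr 2; module
      _ = ‖x‖ ^ 2 + 2 * ((s * r - a) * a) + (s * r - a) ^ 2 * ‖e‖ ^ 2 := by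
        rw [norm_add_sq_real, inner_smul_right, norm_smul, mul_pow, norm_eq_abs, sq_abs]
      _ ≤ 1 := by linarith

variable {n : ℕ} {P : H → ℝ} {x : H}

theorem norm_iteratedFDeriv_diagonal_le_sqrt_chebM (hP : IsContinuousPolynomial n P)
    (hPnorm : ∀ y, ‖y‖ ≤ 1 → |P y| ≤ 1) (hx : ‖x‖ < 1) (k : ℕ) {e : H} (he : ‖e‖ ≤ 1) :
    ‖iteratedFDeriv ℝ k P x fun _ ↦ e‖ ≤ √(chebM n k ‖x‖) := by
  obtain ⟨c, r, t, hr, hr₁, ht, hcx, hrel, hball⟩ := exists_chord_through hx he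
  obtain ⟨p, hdeg, heval⟩ := hP.exists_polynomial_eval_eq c (r • e)
  have hbound := sq_eval_iterate_derivative_le_mul_chebM hdeg
    (fun s hs ↦ heval s ▸ hPnorm _ (hball s hs)) k ht
    ⟨by linarith [norm_nonneg x], hx⟩ hr₁ hrel
  have hderiv : (derivative^[k] p).eval t = r ^ k * iteratedFDeriv ℝ k P x fun _ ↦ e := by
    rw [← congrFun (iteratedDeriv_eval p k) t, funext heval,
      iteratedDeriv_comp_line hP.contDiff, hcx,
      ContinuousMultilinearMap.map_smul_univ, Fin.prod_const, smul_eq_mul]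
  rw [hderiv, mul_pow] at hbound
  exact abs_le_sqrt (le_of_mul_le_mul_left hbound (by positivity))

theorem bernstein_schaeffer_duffin_hilbert_general (n k : ℕ) (P : H → ℝ)
    (hP : IsContinuousPolynomial n P) (hPnorm : ∀ y, ‖y‖ ≤ 1 → |P y| ≤ 1) (x : H) (hx : ‖x‖ < 1) :
    ‖iteratedFDeriv ℝ k P x‖ ^ 2
        = sSup ((fun y ↦ ‖iteratedFDeriv ℝ k P x fun _ ↦ y‖) '' closedBall 0 1) ^ 2 ∧
      sSup ((fun y ↦ ‖iteratedFDeriv ℝ k P x fun _ ↦ y‖) '' closedBall 0 1) ^ 2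
        ≤ chebM n k ‖x‖ := by
  refine ⟨congrArg (· ^ 2) (norm_eq_sSup_norm_diagonal fun v σ ↦
    hP.contDiff.contDiffAt.iteratedFDeriv_comp_perm v σ), ?_⟩
  refine (le_sqrt (Real.sSup_nonneg ?_) (chebM_nonneg _ _ _)).1 (csSup_le ⟨_, 0, by simp, rfl⟩ ?_)
  · rintro _ ⟨y, -, rfl⟩
    exact norm_nonneg _
  · rintro _ ⟨y, hy, rfl⟩
    exact norm_iteratedFDeriv_diagonal_le_sqrt_chebM hP hPnorm hx k (mem_closedBall_zero_iff.1 hy)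

end Hilbert

/-- Schaeffer–Duffin type Bernstein inequality on a real Hilbert space:
if `P` is a continuous polynomial of degree at most `n` with `‖P‖ ≤ 1` and `1 ≤ k ≤ n`,
then `‖D^k P(x)‖² = ‖D̂^k P(x)‖² ≤ M_k(‖x‖)` for every `‖x‖ < 1`. -/
theorem bernstein_schaeffer_duffin_hilbert
    {H : Type*} [NormedAddCommGroup H] [InnerProductSpace ℝ H] [CompleteSpace H]
    (n k : ℕ) (hk1 : 1 ≤ k) (hkn : k ≤ n) (P : H → ℝ)
    (hP : ∃ L : (j : Fin (n + 1)) → ContinuousMultilinearMap ℝ (fun _ : Fin (j : ℕ) => H) ℝ,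
      ∀ x, P x = ∑ j, L j (fun _ => x))
    (hPnorm : ∀ x : H, ‖x‖ ≤ 1 → |P x| ≤ 1)
    (x : H) (hx : ‖x‖ < 1) :
    ‖iteratedFDeriv ℝ k P x‖ ^ 2
        = (sSup ((fun y => ‖iteratedFDeriv ℝ k P x (fun _ => y)‖) '' closedBall (0 : H) 1)) ^ 2 ∧
      (sSup ((fun y => ‖iteratedFDeriv ℝ k P x (fun _ => y)‖) '' closedBall (0 : H) 1)) ^ 2
        ≤ chebM n k ‖x‖ := by
  exact bernstein_schaeffer_duffin_hilbert_general n k P hP hPnorm x hx
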